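/- arXiv:2104.02130 — 2 statements merged into one kernel-verified Lean document; each statement's English description precedes it below -/
import Mathlib

section
/- Let μ be a complex regular Borel measure on the unit circle 𝕋 such that ∫_𝕋 ζ^n dμ(ζ) = 0 for every integer n ≥ 0. Then μ is absolutely continuous with respect to the normalized Haar (arc-length) measure λ on 𝕋; that is, μ(E) = 0 for every Borel set E ⊆ 𝕋 with λ(E) = 0. -/
open MeasureTheory

open Filter Topology Metric

lemma aux_dist (x y : Circle) : dist x y = ‖(x : ℂ) - (y : ℂ)‖ := by
  rw [← dist_eq_norm]; rfl

lemma aux_ball [MeasurableSpace Circle] [BorelSpace Circle]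
    (lam : Measure Circle) [lam.IsHaarMeasure] [IsProbabilityMeasure lam]
    (x : Circle) (r : ℝ) (hr : 0 < r) (hr1 : r ≤ 1) : r / 18 ≤ lam.real (ball x r) := by
  have hinv : ∀ y : Circle, lam.real (ball y r) = lam.real (ball x r) := by
    have key : ∀ y : Circle, lam.real (ball y r) = lam.real (ball 1 r) := by
      intro y
      have h : (fun z => y * z) ⁻¹' (ball y r) = ball (1 : Circle) r := by
        ext z
        simp only [Set.mem_preimage, mem_ball]
        have : dist (y * z) y = dist z 1 := by
          conv_lhs => rw [← mul_one y, mul_assoc, one_mul]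
          rw [aux_dist, aux_dist, Circle.coe_mul,
            Circle.coe_mul, ← mul_sub, norm_mul, Circle.norm_coe, one_mul]
        rw [this]
      rw [← h, measureReal_def, measureReal_def, measure_preimage_mul]
    intro y
    rw [key y, key x]
  obtain ⟨m, hm⟩ : ∃ m : ℕ, m = ⌊1 / r⌋₊ + 1 := ⟨_, rfl⟩
  have hm1 : 1 / r < m := by rw [hm]; push_cast; exact Nat.lt_floor_add_one _
  have hm2 : (m : ℝ) ≤ 2 / r := by
    have h1 : (⌊1 / r⌋₊ : ℝ) ≤ 1 / r := Nat.floor_le (by positivity)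
    have h2 : 1 ≤ 1 / r := by rw [le_div_iff₀ hr]; linarith
    rw [hm]; push_cast
    have : 2 / r = 1 / r + 1 / r := by ring
    linarith
  have hmpos : (0 : ℝ) < m := lt_trans (by positivity) hm1
  have hm1' : (1 : ℝ) ≤ m := by rw [hm]; push_cast; linarith [Nat.cast_nonneg (α := ℝ) ⌊1 / r⌋₊]
  have hcov : (Set.univ : Set Circle) ⊆
      ⋃ k ∈ Finset.Icc (-(4 * m : ℤ)) (4 * m : ℤ), ball (Circle.exp ((k : ℝ) / m)) r := by
    intro z _
    have ht1 := Complex.neg_pi_lt_arg (z : ℂ)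
    have ht2 := Complex.arg_le_pi (z : ℂ)
    obtain ⟨t, ht⟩ : ∃ t, t = Complex.arg (z : ℂ) := ⟨_, rfl⟩
    rw [← ht] at ht1 ht2
    have hz : Circle.exp t = z := by rw [ht]; exact Circle.exp_arg z
    have hpi := Real.pi_lt_four
    have hf1 := Int.floor_le (t * m)
    have hf2 := Int.lt_floor_add_one (t * m)
    simp only [Set.mem_iUnion]
    refine ⟨⌊t * m⌋, ?_, ?_⟩
    · rw [Finset.mem_Icc]
      constructor
      · rw [Int.le_floor]; push_cast; nlinarith
      · have : (⌊t * m⌋ : ℝ) ≤ ((4 * m : ℤ) : ℝ) := by push_cast; nlinarith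
        exact_mod_cast this
    · rw [mem_ball, ← hz, aux_dist, Circle.coe_exp, Circle.coe_exp]
      obtain ⟨k, hk⟩ : ∃ k : ℝ, k = (⌊t * m⌋ : ℝ) / m := ⟨_, rfl⟩
      have : Complex.exp (t * Complex.I) - Complex.exp (((⌊t * m⌋ : ℝ) / m : ℝ) * Complex.I)
          = Complex.exp (k * Complex.I) * (Complex.exp (Complex.I * (t - k : ℝ)) - 1) := by
        rw [← hk, mul_sub, ← Complex.exp_add]
        push_cast
        ring_nf
      rw [this, norm_mul, Complex.norm_exp_ofReal_mul_I, one_mul]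
      refine lt_of_le_of_lt Real.norm_exp_I_mul_ofReal_sub_one_le ?_
      rw [Real.norm_eq_abs]
      have h1 : k * m = ⌊t * m⌋ := by rw [hk]; field_simp
      have h2 : 1 < r * m := by rw [div_lt_iff₀ hr] at hm1; linarith
      rw [abs_lt]
      constructor <;> nlinarith
  have h1 : lam.real Set.univ ≤ ∑ k ∈ Finset.Icc (-(4 * m : ℤ)) (4 * m : ℤ), lam.real (ball x r) := by
    refine (measureReal_mono hcov (measure_ne_top _ _)).trans ?_
    refine (measureReal_biUnion_finset_le _ _).trans ?_
    exact Finset.sum_le_sum fun k _ => (hinv _).le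
  rw [Finset.sum_const, nsmul_eq_mul, probReal_univ, Int.card_Icc] at h1
  have h2 : (((4 * m : ℤ) + 1 - (-(4 * m : ℤ))).toNat : ℝ) = 8 * m + 1 := by
    have : (4 * m : ℤ) + 1 - (-(4 * m : ℤ)) = ((8 * m + 1 : ℕ) : ℤ) := by push_cast; ring
    rw [this, Int.toNat_natCast]; push_cast; ring
  rw [h2] at h1
  have h3 : (8 * m + 1 : ℝ) ≤ 18 / r := by
    have : 18 / r = 9 * (2 / r) := by ring
    linarith
  have h4 : 1 ≤ 18 / r * lam.real (ball x r) :=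
    h1.trans (mul_le_mul_of_nonneg_right h3 measureReal_nonneg)
  have h5 : 18 / r * lam.real (ball x r) * (r / 18) = lam.real (ball x r) := by field_simp
  nlinarith [h5, h4]

lemma aux_cover [MeasurableSpace Circle] [BorelSpace Circle]
    (lam : Measure Circle) [lam.IsHaarMeasure] [IsProbabilityMeasure lam]
    (K : Set Circle) (hK : IsCompact K) (h0 : lam K = 0) (ε : ℝ) (hε : 0 < ε) :
    ∃ (r : ℝ) (S : Finset Circle), 0 < r ∧ (∀ s ∈ S, s ∈ K) ∧ (∀ z ∈ K, ∃ s ∈ S, dist z s ≤ r) ∧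
      S.card * r ≤ ε := by
  have ht : Tendsto (fun r => lam (cthickening r K)) (𝓝 0) (𝓝 (lam K)) :=
    tendsto_measure_cthickening_of_isCompact hK
  rw [h0] at ht
  have hev : ∀ᶠ r in 𝓝 (0:ℝ), lam (cthickening r K) < ENNReal.ofReal (ε / 36) :=
    ht.eventually (gt_mem_nhds (by positivity))
  obtain ⟨δ₀, hδ₀, hb⟩ := Metric.eventually_nhds_iff.1 hev
  obtain ⟨r, hr, hr1, hr2⟩ : ∃ r : ℝ, 0 < r ∧ r ≤ 1 ∧ r < δ₀ :=
    ⟨min 1 (δ₀ / 2), by positivity, min_le_left _ _, by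
      have := min_le_right 1 (δ₀ / 2); linarith⟩
  have hmeas := @hb r (by simpa [abs_of_pos hr] using hr2)
  lift r to NNReal using hr.le
  have hfin : packingNumber r K ≠ ⊤ := by
    obtain ⟨N, hN, hNf, hNc⟩ := exists_finite_isCover_of_isCompact (ε := r / 2)
      (by have : r ≠ 0 := by rintro rfl; simp at hr
          positivity) hK
    have h1 := packingNumber_two_mul_le_externalCoveringNumber (r / 2) K
    have h2 : externalCoveringNumber (r / 2) K ≤ N.encard := hNc.externalCoveringNumber_le_encard
    have h3 : 2 * (r / 2) = r := by field_simp
    rw [h3] at h1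
    exact ((h1.trans h2).trans_lt hNf.encard_lt_top).ne
  have hSf : (maximalSeparatedSet r K).Finite := by
    rw [← Set.encard_ne_top_iff, encard_maximalSeparatedSet hfin]; exact hfin
  have hsub : maximalSeparatedSet r K ⊆ K := maximalSeparatedSet_subset
  have hsep : IsSeparated r (maximalSeparatedSet r K) := isSeparated_maximalSeparatedSet
  have hcov := isCover_maximalSeparatedSet hfin
  rw [isCover_iff_subset_iUnion_closedBall] at hcov
  refine ⟨r, hSf.toFinset, hr, ?_, ?_, ?_⟩
  · intro s hs; exact hsub (by simpa using hs)
  · intro z hz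
    have := hcov hz
    simp only [Set.mem_iUnion, mem_closedBall] at this
    obtain ⟨s, hs, h⟩ := this
    exact ⟨s, by simpa using hs, h⟩
  · have hdisj : Set.PairwiseDisjoint (↑hSf.toFinset : Set Circle)
        (fun s => ball s ((r : ℝ) / 2)) := by
      intro a ha b hb hab
      apply ball_disjoint_ball
      have h : (r : ENNReal) < edist a b := hsep (by simpa using ha) (by simpa using hb) hab
      rw [edist_nndist] at h
      have : (r : ℝ) < dist a b := by
        rw [← coe_nndist]; exact_mod_cast h
      linarith
    have h1 := measureReal_biUnion_finset (μ := lam) hdisj (fun s _ => measurableSet_ball)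
    have h2 : (⋃ s ∈ hSf.toFinset, ball s ((r : ℝ) / 2)) ⊆ cthickening r K := by
      intro z hz
      simp only [Set.mem_iUnion] at hz
      obtain ⟨s, hs, h⟩ := hz
      refine mem_cthickening_of_dist_le z s _ _ (hsub (by simpa using hs)) ?_
      rw [mem_ball] at h
      linarith
    have h3 : lam.real (cthickening r K) ≤ ε / 36 := by
      rw [measureReal_def]
      exact ENNReal.toReal_le_of_le_ofReal (by positivity) hmeas.le
    have h4 := measureReal_mono (μ := lam) h2 (measure_ne_top _ _)
    have h5 : ∑ s ∈ hSf.toFinset, ((r : ℝ) / 2 / 18) ≤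
        ∑ s ∈ hSf.toFinset, lam.real (ball s ((r : ℝ) / 2)) :=
      Finset.sum_le_sum fun s _ => aux_ball lam s _ (by positivity) (by linarith)
    rw [Finset.sum_const, nsmul_eq_mul] at h5
    linarith

lemma aux_poly [MeasurableSpace Circle] [BorelSpace Circle]
    (μ₁ μ₂ μ₃ μ₄ : Measure Circle)
    [IsFiniteMeasure μ₁] [IsFiniteMeasure μ₂] [IsFiniteMeasure μ₃] [IsFiniteMeasure μ₄]
    (hann : ∀ n : ℕ,
      (∫ z : Circle, (z : ℂ) ^ n ∂μ₁) - (∫ z : Circle, (z : ℂ) ^ n ∂μ₂)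
        + Complex.I * ((∫ z : Circle, (z : ℂ) ^ n ∂μ₃) - (∫ z : Circle, (z : ℂ) ^ n ∂μ₄)) = 0)
    (f : ℂ → ℂ) (R : ℝ) (hR : 1 < R) (hf : DifferentiableOn ℂ f (ball 0 R)) :
    (∫ z : Circle, f z ∂μ₁) - (∫ z : Circle, f z ∂μ₂)
        + Complex.I * ((∫ z : Circle, f z ∂μ₃) - (∫ z : Circle, f z ∂μ₄)) = 0 := by
  have hball : ∀ x : ℝ, 0 < x → x < R → (x : ℂ) ∈ ball (0 : ℂ) R := by
    intro x h1 h2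
    simpa [abs_of_pos h1] using h2
  obtain ⟨ρ, h1ρ, hρR⟩ := exists_between hR
  obtain ⟨a, ha⟩ : ∃ a : ℕ → ℂ, a = fun n => ((n.factorial : ℂ))⁻¹ * iteratedDeriv n f 0 := ⟨_, rfl⟩
  have hs : ∀ z ∈ ball (0 : ℂ) R, HasSum (fun n => a n * z ^ n) (f z) := by
    intro z hz
    have := Complex.hasSum_taylorSeries_on_ball hf hz
    refine this.congr_fun ?_
    intro n
    simp [ha]; ring
  have hsum : Summable fun n => ‖a n‖ := by
    have h := (hs (ρ : ℂ) (hball ρ (by linarith) hρR)).summable.norm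
    refine h.of_nonneg_of_le (fun n => norm_nonneg _) fun n => ?_
    rw [norm_mul, norm_pow]
    have : 1 ≤ ‖(ρ : ℂ)‖ ^ n := one_le_pow₀ (by simp [abs_of_pos (by linarith : 0 < ρ)]; linarith)
    exact le_mul_of_one_le_right (norm_nonneg _) this
  have hmem : ∀ z : Circle, (z : ℂ) ∈ ball (0 : ℂ) R := fun z => by
    rw [mem_ball_zero_iff, Circle.norm_coe]; exact hR
  have hint : ∀ (ν : Measure Circle) [IsFiniteMeasure ν],
      HasSum (fun n => a n * ∫ z : Circle, (z : ℂ) ^ n ∂ν) (∫ z : Circle, f z ∂ν) := by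
    intro ν _
    have hI : ∀ n : ℕ, Integrable (fun z : Circle => a n * (z : ℂ) ^ n) ν := fun n =>
      Continuous.integrable_of_hasCompactSupport (by fun_prop) (HasCompactSupport.of_compactSpace _)
    have := hasSum_integral_of_summable_integral_norm (μ := ν) hI (by
      simp only [norm_mul, norm_pow, Circle.norm_coe, one_pow, mul_one, integral_const,
        smul_eq_mul]
      exact hsum.mul_left _)
    simp only [integral_const_mul] at this
    have he : ∫ z : Circle, f z ∂ν = ∫ z : Circle, ∑' n, a n * (z : ℂ) ^ n ∂ν :=
      integral_congr_ae (ae_of_all _ fun (z : Circle) => (hs z (hmem z)).tsum_eq.symm)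
    rw [he]
    exact this
  have H := ((hint μ₁).sub (hint μ₂)).add (((hint μ₃).sub (hint μ₄)).mul_left Complex.I)
  refine H.unique ?_
  convert hasSum_zero using 1
  ext n
  linear_combination a n * hann n

lemma aux_fun [MeasurableSpace Circle] [BorelSpace Circle]
    (lam : Measure Circle) [lam.IsHaarMeasure] [IsProbabilityMeasure lam]
    (K : Set Circle) (hK : IsCompact K) (h0 : lam K = 0) (N : ℝ) (hN : 0 < N) :
    ∃ (f : ℂ → ℂ) (R : ℝ), 1 < R ∧ DifferentiableOn ℂ f (ball 0 R) ∧
      (∀ z : Circle, ‖f z‖ ≤ 1) ∧ (∀ z ∈ K, ‖f z - 1‖ ≤ 4 / N) ∧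
      (∀ (z : Circle) (d : ℝ), 0 < d → (∀ s ∈ K, d ≤ dist z s) → ‖f z‖ ≤ 1 / (N * d)) := by
  obtain ⟨r, S, hr, hSK, hcov, hcard⟩ := aux_cover lam K hK h0 (1 / N ^ 2) (by positivity)
  obtain ⟨u, hu⟩ : ∃ u : Circle → ℂ → ℂ, ∀ s z, u s z = 1 + r - z * (starRingEnd ℂ) (s : ℂ) :=
    ⟨_, fun _ _ => rfl⟩
  have hure : ∀ s z, ‖z‖ < 1 + r → 0 < (u s z).re := by
    intro s z hz
    have h1 : (z * (starRingEnd ℂ) (s : ℂ)).re ≤ ‖z‖ := by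
      refine (Complex.re_le_norm _).trans ?_
      rw [norm_mul, RCLike.norm_conj, Circle.norm_coe, mul_one]
    rw [hu]
    simp only [Complex.sub_re, Complex.add_re, Complex.one_re, Complex.ofReal_re]
    linarith
  obtain ⟨g, hg⟩ : ∃ g : ℂ → ℂ, ∀ z, g z = ∑ s ∈ S, ((N * r : ℝ) : ℂ) * (u s z)⁻¹ :=
    ⟨_, fun _ => rfl⟩
  have hterm : ∀ s z, (((N * r : ℝ) : ℂ) * (u s z)⁻¹).re
      = N * r * ((u s z).re / Complex.normSq (u s z)) := by
    intro s z
    rw [Complex.re_ofReal_mul, Complex.inv_re]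
  have hterm0 : ∀ s z, ‖z‖ < 1 + r → 0 ≤ (((N * r : ℝ) : ℂ) * (u s z)⁻¹).re := by
    intro s z hz
    rw [hterm]
    have := hure s z hz
    have := Complex.normSq_nonneg (u s z)
    positivity
  have hgre : ∀ z, ‖z‖ < 1 + r → 0 ≤ (g z).re := by
    intro z hz
    rw [hg, Complex.re_sum]
    exact Finset.sum_nonneg fun s _ => hterm0 s z hz
  have hone : ∀ z, ‖z‖ < 1 + r → 1 + (g z).re ≤ ‖1 + g z‖ := by
    intro z hz
    have := Complex.re_le_norm (1 + g z)
    simpa using this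
  have hcz : ∀ z : Circle, ‖(z : ℂ)‖ < 1 + r := fun z => by rw [Circle.norm_coe]; linarith
  have hmul : ∀ s z : Circle, ‖(z : ℂ) * (starRingEnd ℂ) (s : ℂ) - 1‖ = dist z s := by
    intro s z
    have h1 : (s : ℂ) * (starRingEnd ℂ) (s : ℂ) = 1 := by
      rw [Complex.mul_conj, Circle.normSq_coe]; simp
    rw [← h1, ← sub_mul, norm_mul, RCLike.norm_conj, Circle.norm_coe, mul_one, aux_dist]
  refine ⟨fun z => g z / (1 + g z), 1 + r, by linarith, ?_, ?_, ?_, ?_⟩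
  · have hgd : DifferentiableOn ℂ g (ball 0 (1 + r)) := by
      have : g = fun z => ∑ s ∈ S, ((N * r : ℝ) : ℂ) * (u s z)⁻¹ := funext hg
      rw [this]
      refine DifferentiableOn.fun_sum fun s _ => ?_
      refine DifferentiableOn.const_mul ?_ _
      refine DifferentiableOn.inv ?_ ?_
      · have : u s = fun z => 1 + r - z * (starRingEnd ℂ) (s : ℂ) := funext (hu s)
        rw [this]
        fun_prop
      · intro z hz h
        have := hure s z (by simpa using hz)
        rw [h] at this
        simp at this
    refine hgd.div (hgd.const_add 1) ?_
    intro z hz h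
    have hz' : ‖z‖ < 1 + r := by simpa using hz
    have h1 := hone z hz'
    have h2 := hgre z hz'
    rw [h, norm_zero] at h1
    linarith
  · intro z
    have h1 := hone z (hcz z)
    have h2 := hgre z (hcz z)
    rw [norm_div]
    refine div_le_one_of_le₀ ?_ (norm_nonneg _)
    rw [Complex.norm_def, Complex.norm_def]
    apply Real.sqrt_le_sqrt
    simp only [Complex.normSq_apply, Complex.add_re, Complex.add_im, Complex.one_re, Complex.one_im]
    nlinarith
  · intro z hz
    have h1 := hone z (hcz z)
    have h2 := hgre z (hcz z)
    have hne : 1 + g z ≠ 0 := by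
      intro h
      rw [h, norm_zero] at h1
      linarith
    have h3 : g z / (1 + g z) - 1 = -(1 / (1 + g z)) := by field_simp; ring
    simp only [h3]
    rw [norm_neg, norm_div, norm_one]
    obtain ⟨s, hs, hd⟩ := hcov z hz
    have h4 : N / 4 ≤ (g z).re := by
      have h5 : (((N * r : ℝ) : ℂ) * (u s z)⁻¹).re ≤ (g z).re := by
        rw [hg, Complex.re_sum]
        exact Finset.single_le_sum (f := fun s => (((N * r : ℝ) : ℂ) * (u s z)⁻¹).re)
          (fun s _ => hterm0 s z (hcz z)) hs
      refine le_trans ?_ h5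
      rw [hterm]
      have h6 : r ≤ (u s z).re := by
        have : ((z : ℂ) * (starRingEnd ℂ) (s : ℂ)).re ≤ 1 := by
          refine (Complex.re_le_norm _).trans ?_
          rw [norm_mul, RCLike.norm_conj, Circle.norm_coe, Circle.norm_coe, mul_one]
        rw [hu]
        simp only [Complex.sub_re, Complex.add_re, Complex.one_re, Complex.ofReal_re]
        linarith
      have h7 : ‖u s z‖ ≤ 2 * r := by
        have : u s z = r - ((z : ℂ) * (starRingEnd ℂ) (s : ℂ) - 1) := by rw [hu]; ring
        rw [this]
        refine (norm_sub_le _ _).trans ?_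
        rw [hmul, Complex.norm_real, Real.norm_eq_abs, abs_of_pos hr]
        linarith
      have h8 : Complex.normSq (u s z) ≤ 4 * r ^ 2 := by
        rw [Complex.normSq_eq_norm_sq]
        nlinarith [norm_nonneg (u s z)]
      have h9 : 0 < Complex.normSq (u s z) := by
        rw [Complex.normSq_pos]
        intro h
        rw [h] at h6
        simp at h6
        linarith
      have h10 : r / (4 * r ^ 2) ≤ (u s z).re / Complex.normSq (u s z) := by
        gcongr
        linarith
      calc N / 4 = N * r * (r / (4 * r ^ 2)) := by field_simp
        _ ≤ _ := by gcongr
    calc 1 / ‖1 + g z‖ ≤ 1 / (N / 4) := by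
          apply one_div_le_one_div_of_le (by positivity)
          linarith
      _ = 4 / N := by field_simp
  · intro z d hd hzd
    have h1 := hone z (hcz z)
    have h2 := hgre z (hcz z)
    rw [norm_div]
    have h3 : ‖g z‖ ≤ 1 / (N * d) := by
      rw [hg]
      refine (norm_sum_le _ _).trans ?_
      have h4 : ∀ s ∈ S, ‖((N * r : ℝ) : ℂ) * (u s z)⁻¹‖ ≤ N * r / d := by
        intro s hs
        rw [norm_mul, norm_inv, Complex.norm_real, Real.norm_eq_abs, abs_of_pos (by positivity),
          ← div_eq_mul_inv]
        have h5 : d ≤ ‖u s z‖ := by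
          refine (hzd s (hSK s hs)).trans ?_
          rw [← hmul, Complex.norm_def, Complex.norm_def]
          apply Real.sqrt_le_sqrt
          have h6 : ((z : ℂ) * (starRingEnd ℂ) (s : ℂ)).re ≤ 1 := by
            refine (Complex.re_le_norm _).trans ?_
            rw [norm_mul, RCLike.norm_conj, Circle.norm_coe, Circle.norm_coe, mul_one]
          rw [hu]
          generalize (z : ℂ) * (starRingEnd ℂ) (s : ℂ) = w at h6
          simp only [Complex.normSq_apply, Complex.add_re, Complex.add_im, Complex.sub_re,
            Complex.sub_im, Complex.one_re, Complex.one_im, Complex.ofReal_re, Complex.ofReal_im]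
          nlinarith
        gcongr
      refine (Finset.sum_le_sum h4).trans ?_
      rw [Finset.sum_const, nsmul_eq_mul]
      calc (S.card : ℝ) * (N * r / d) = (S.card * r) * (N / d) := by ring
        _ ≤ 1 / N ^ 2 * (N / d) := by gcongr
        _ = 1 / (N * d) := by field_simp
    refine (div_le_self (norm_nonneg _) (by linarith)).trans h3

lemma aux_compact [MeasurableSpace Circle] [BorelSpace Circle]
    (lam : Measure Circle) [lam.IsHaarMeasure] [IsProbabilityMeasure lam]
    (μ₁ μ₂ μ₃ μ₄ : Measure Circle)
    [IsFiniteMeasure μ₁] [IsFiniteMeasure μ₂] [IsFiniteMeasure μ₃] [IsFiniteMeasure μ₄]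
    (hann : ∀ n : ℕ,
      (∫ z : Circle, (z : ℂ) ^ n ∂μ₁) - (∫ z : Circle, (z : ℂ) ^ n ∂μ₂)
        + Complex.I * ((∫ z : Circle, (z : ℂ) ^ n ∂μ₃) - (∫ z : Circle, (z : ℂ) ^ n ∂μ₄)) = 0)
    (K : Set Circle) (hK : IsCompact K) (h0 : lam K = 0) :
    ((μ₁.real K : ℂ) - (μ₂.real K : ℂ))
        + Complex.I * ((μ₃.real K : ℂ) - (μ₄.real K : ℂ)) = 0 := by
  choose f R hR hf hb h1 h2 using fun n : ℕ =>
    aux_fun lam K hK h0 ((n : ℝ) + 1) (by positivity)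
  have hN : Tendsto (fun n : ℕ => (n : ℝ) + 1) atTop atTop :=
    tendsto_atTop_add_const_right _ _ tendsto_natCast_atTop_atTop
  have hlim : ∀ (ν : Measure Circle) [IsFiniteMeasure ν],
      Tendsto (fun n => ∫ z : Circle, f n z ∂ν) atTop (𝓝 (ν.real K : ℂ)) := by
    intro ν _
    have hval : (ν.real K : ℂ) = ∫ z : Circle, K.indicator (fun _ => (1 : ℂ)) z ∂ν := by
      rw [integral_indicator hK.measurableSet]
      simp
    rw [hval]
    refine tendsto_integral_of_dominated_convergence (fun _ => (1 : ℝ)) ?_ (integrable_const _)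
      ?_ ?_
    · intro n
      refine Continuous.aestronglyMeasurable ?_
      refine (hf n).continuousOn.comp_continuous continuous_subtype_val ?_
      intro z
      rw [mem_ball_zero_iff, Circle.norm_coe]
      exact hR n
    · exact fun n => ae_of_all _ fun z => hb n z
    · refine ae_of_all _ fun z => ?_
      by_cases hz : z ∈ K
      · rw [Set.indicator_of_mem hz, tendsto_iff_norm_sub_tendsto_zero]
        exact squeeze_zero (fun n => norm_nonneg _) (fun n => h1 n z hz)
          (tendsto_const_nhds.div_atTop hN)
      · rw [Set.indicator_of_notMem hz]
        obtain ⟨d, hd, hd'⟩ : ∃ d > 0, ∀ s ∈ K, d ≤ dist z s := by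
          obtain ⟨d, hd, hdK⟩ := Metric.isOpen_iff.1 hK.isClosed.isOpen_compl z hz
          refine ⟨d, hd, fun s hs => ?_⟩
          by_contra! h
          exact hdK (by rw [mem_ball, dist_comm]; exact h) hs
        refine squeeze_zero_norm (fun n => h2 n z d hd hd') ?_
        exact tendsto_const_nhds.div_atTop (hN.atTop_mul_const hd)
  have H := ((hlim μ₁).sub (hlim μ₂)).add (((hlim μ₃).sub (hlim μ₄)).const_mul Complex.I)
  refine tendsto_nhds_unique H ?_
  refine tendsto_const_nhds.congr fun n => ?_
  exact (aux_poly μ₁ μ₂ μ₃ μ₄ hann (f n) (R n) (hR n) (hf n)).symm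

/-- **F. and M. Riesz theorem** (Theorem 3.1 of the paper).  A complex regular Borel
measure `μ` on the unit circle, given via its Jordan decomposition
`μ = (μ₁ - μ₂) + i (μ₃ - μ₄)` into finite positive regular Borel measures, that
annihilates all the monomials `ζ ↦ ζ ^ n`, `n ≥ 0` (hence the disc algebra) is
absolutely continuous with respect to the normalized Haar (arc-length) measure `lam`. -/
theorem stmt_0 [MeasurableSpace Circle] [BorelSpace Circle]
    (lam : Measure Circle) [lam.IsHaarMeasure] [IsProbabilityMeasure lam]
    (μ₁ μ₂ μ₃ μ₄ : Measure Circle)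
    [IsFiniteMeasure μ₁] [IsFiniteMeasure μ₂] [IsFiniteMeasure μ₃] [IsFiniteMeasure μ₄]
    [μ₁.Regular] [μ₂.Regular] [μ₃.Regular] [μ₄.Regular]
    (hann : ∀ n : ℕ,
      (∫ z : Circle, (z : ℂ) ^ n ∂μ₁) - (∫ z : Circle, (z : ℂ) ^ n ∂μ₂)
        + Complex.I * ((∫ z : Circle, (z : ℂ) ^ n ∂μ₃) - (∫ z : Circle, (z : ℂ) ^ n ∂μ₄)) = 0) :
    ∀ E : Set Circle, MeasurableSet E → lam E = 0 →
      (((μ₁ E).toReal : ℂ) - ((μ₂ E).toReal : ℂ))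
        + Complex.I * (((μ₃ E).toReal : ℂ) - ((μ₄ E).toReal : ℂ)) = 0 := by
  intro E hE hE0
  obtain ⟨ν, hν⟩ : ∃ ν : Measure Circle, ν = μ₁ + μ₂ + μ₃ + μ₄ := ⟨_, rfl⟩
  have : IsFiniteMeasure ν := by rw [hν]; infer_instance
  have hex : ∀ n : ℕ, ∃ K ⊆ E, IsCompact K ∧ ν (E \ K) < ENNReal.ofReal (1 / ((n : ℝ) + 1)) :=
    fun n => hE.exists_isCompact_sdiff_lt (measure_ne_top _ _) (by
      rw [ne_eq, ENNReal.ofReal_eq_zero, not_le]; positivity)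
  choose K hKE hK hKν using hex
  have hlim : ∀ (m : Measure Circle) [IsFiniteMeasure m], m ≤ ν →
      Tendsto (fun n => (m.real (K n) : ℂ)) atTop (𝓝 (m.real E : ℂ)) := by
    intro m _ hm
    have h1 : Tendsto (fun n => m.real (K n)) atTop (𝓝 (m.real E)) := by
      rw [tendsto_iff_norm_sub_tendsto_zero]
      refine squeeze_zero (fun n => norm_nonneg _) (fun n => ?_)
        tendsto_one_div_add_atTop_nhds_zero_nat
      have h2 : m.real (E \ K n) = m.real E - m.real (K n) :=
        measureReal_sdiff (hKE n) (hK n).measurableSet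
      have h3 : m.real (E \ K n) ≤ 1 / ((n : ℝ) + 1) := by
        rw [measureReal_def]
        exact ENNReal.toReal_le_of_le_ofReal (by positivity) ((hm _).trans (hKν n).le)
      rw [norm_sub_rev, ← h2, Real.norm_of_nonneg measureReal_nonneg]
      exact h3
    exact (Complex.continuous_ofReal.tendsto _).comp h1
  have l1 : μ₁ ≤ ν := by
    rw [hν, add_assoc, add_assoc]; exact Measure.le_add_right le_rfl
  have l2 : μ₂ ≤ ν := by
    rw [hν, add_assoc]; exact Measure.le_add_right (Measure.le_add_left le_rfl)
  have l3 : μ₃ ≤ ν := by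
    rw [hν]; exact Measure.le_add_right (Measure.le_add_left le_rfl)
  have l4 : μ₄ ≤ ν := by
    rw [hν]; exact Measure.le_add_left le_rfl
  have H := ((hlim μ₁ l1).sub (hlim μ₂ l2)).add
    (((hlim μ₃ l3).sub (hlim μ₄ l4)).const_mul Complex.I)
  refine tendsto_nhds_unique H ?_
  refine tendsto_const_nhds.congr fun n => ?_
  exact (aux_compact lam μ₁ μ₂ μ₃ μ₄ hann (K n) (hK n)
    (measure_mono_null (hKE n) hE0)).symm
end

section
/- Let τ : C(𝕋) → ℂ be a bounded linear functional such that τ(ζ ↦ ζ^n) = 0 for every integer n ≥ 0. Then there exists g ∈ L¹(𝕋, λ) with ‖g‖_1 = ‖τ‖, with ∫_𝕋 ζ^n g(ζ) dλ(ζ) = 0 for every integer n ≥ 0, and such that τ(f) = ∫_𝕋 f g dλ for every f ∈ C(𝕋). -/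
open MeasureTheory
set_option linter.unusedSectionVars false


section dom
open scoped NNReal CompactlySupported
variable {X : Type*} [TopologicalSpace X] [CompactSpace X]

/-- total variation functional -/
noncomputable def tv (τ : C(X, ℂ) →L[ℂ] ℂ) (f : X → ℝ≥0) : ℝ≥0 :=
  sSup {r : ℝ≥0 | ∃ u : C(X, ℂ), (∀ x, ‖u x‖ ≤ f x) ∧ r = ‖τ u‖₊}

lemma tv_bdd (τ : C(X, ℂ) →L[ℂ] ℂ) (f : C(X, ℝ≥0)) :
    BddAbove {r : ℝ≥0 | ∃ u : C(X, ℂ), (∀ x, ‖u x‖ ≤ f x) ∧ r = ‖τ u‖₊} := by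
  obtain ⟨C, hC⟩ := (isCompact_range f.continuous).bddAbove
  refine ⟨‖τ‖₊ * C, ?_⟩
  rintro r ⟨u, hu, rfl⟩
  refine (τ.le_opNNNorm u).trans ?_
  gcongr
  rw [← NNReal.coe_le_coe]
  refine (ContinuousMap.norm_le u (by positivity)).2 fun x => (hu x).trans ?_
  exact_mod_cast hC ⟨x, rfl⟩

lemma le_tv (τ : C(X, ℂ) →L[ℂ] ℂ) (f : C(X, ℝ≥0)) (u : C(X, ℂ)) (hu : ∀ x, ‖u x‖ ≤ f x) :
    ‖τ u‖₊ ≤ tv τ f := le_csSup (tv_bdd τ f) ⟨u, hu, rfl⟩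

lemma tv_le (τ : C(X, ℂ) →L[ℂ] ℂ) (f : X → ℝ≥0) (C : ℝ≥0)
    (h : ∀ u : C(X, ℂ), (∀ x, ‖u x‖ ≤ f x) → ‖τ u‖₊ ≤ C) : tv τ f ≤ C := by
  refine csSup_le ⟨_, 0, by simp, rfl⟩ ?_
  rintro r ⟨u, hu, rfl⟩
  exact h u hu

lemma tv_smul_le (τ : C(X, ℂ) →L[ℂ] ℂ) (c : ℝ≥0) (f : C(X, ℝ≥0)) :
    tv τ (c • f : C(X, ℝ≥0)) ≤ c * tv τ f := by
  rcases eq_or_ne c 0 with rfl | hc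
  · refine tv_le _ _ _ fun u hu => ?_
    have : u = 0 := by ext x; simpa using hu x
    simp [this]
  refine tv_le _ _ _ fun u hu => ?_
  have hc' : (0:ℝ) < c := by positivity
  have := le_tv τ f (((c⁻¹ : ℝ≥0) : ℂ) • u) (fun x => by
    have := hu x
    simp at this ⊢
    rw [inv_mul_le_iff₀ hc']; exact this)
  rw [map_smul, nnnorm_smul] at this
  have h2 : ‖((c⁻¹ : ℝ≥0) : ℂ)‖₊ = c⁻¹ := by ext; simp
  rw [h2] at this
  rwa [inv_mul_le_iff₀ (by positivity)] at this

lemma tv_smul (τ : C(X, ℂ) →L[ℂ] ℂ) (c : ℝ≥0) (f : C(X, ℝ≥0)) :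
    tv τ (c • f : C(X, ℝ≥0)) = c * tv τ f := by
  refine le_antisymm (tv_smul_le τ c f) ?_
  rcases eq_or_ne c 0 with rfl | hc
  · simp
  have := tv_smul_le τ c⁻¹ (c • f)
  rw [smul_smul, inv_mul_cancel₀ hc, one_smul] at this
  rwa [← le_inv_mul_iff₀ (by positivity)]

lemma exists_rot (w : ℂ) : ∃ c : ℂ, ‖c‖ = 1 ∧ c * w = ‖w‖ := by
  rcases eq_or_ne w 0 with rfl | hw
  · exact ⟨1, by simp⟩
  have : (‖w‖ : ℂ) ≠ 0 := by simpa using hw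
  refine ⟨‖w‖ / w, ?_, ?_⟩
  · simp [hw]
  · field_simp

lemma tv_add (τ : C(X, ℂ) →L[ℂ] ℂ) (f g : C(X, ℝ≥0)) :
    tv τ (f + g : C(X, ℝ≥0)) = tv τ f + tv τ g := by
  apply le_antisymm
  · refine tv_le _ _ _ fun u hu => ?_
    refine le_of_forall_pos_le_add fun δ hδ => ?_
    obtain ⟨ε, hε, hε'⟩ : ∃ ε : ℝ≥0, 0 < ε ∧ ‖τ‖₊ * ε ≤ δ := by
      refine ⟨δ / (‖τ‖₊ + 1), by positivity, ?_⟩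
      rw [mul_div_assoc', div_le_iff₀ (by positivity), mul_comm]
      gcongr; simp
    have hpos : ∀ x, (0:ℝ) < (f x : ℝ) + g x + ε := fun x => by positivity
    have hpos' : ∀ x, ((f x : ℝ) : ℂ) + (g x : ℝ) + (ε : ℝ) ≠ 0 := fun x => by
      exact_mod_cast (hpos x).ne'
    have hn : ∀ x, ‖((f x : ℝ) : ℂ) + (g x : ℝ) + (ε : ℝ)‖ = (f x : ℝ) + g x + ε := fun x => by
      rw [← Complex.ofReal_add, ← Complex.ofReal_add, Complex.norm_real,
        Real.norm_of_nonneg (hpos x).le]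
    let A (k : C(X, ℝ≥0)) : C(X, ℂ) :=
      ⟨fun x => u x * ((k x : ℝ) : ℂ) / (((f x : ℝ) : ℂ) + (g x : ℝ) + (ε : ℝ)), by
        refine Continuous.div ?_ ?_ hpos'
        · fun_prop
        · fun_prop⟩
    have hA : ∀ k x, ‖A k x‖ ≤ k x := fun k x => by
      simp only [A, ContinuousMap.coe_mk, norm_div, norm_mul, hn]
      rw [div_le_iff₀ (hpos x), mul_comm]
      have h1 := hu x
      simp only [ContinuousMap.add_apply, NNReal.coe_add] at h1
      have h2 : ‖((k x : ℝ) : ℂ)‖ = k x := by simp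
      rw [h2]
      gcongr
      have : (0:ℝ) ≤ ε := ε.2
      linarith
    have h3 : ‖u - (A f + A g)‖₊ ≤ ε := by
      rw [← NNReal.coe_le_coe, coe_nnnorm]
      refine (ContinuousMap.norm_le _ (NNReal.coe_nonneg ε)).2 fun x => ?_
      have e : (u - (A f + A g)) x = u x * ((ε:ℝ):ℂ) / (((f x : ℝ) : ℂ) + (g x : ℝ) + (ε : ℝ)) := by
        simp only [A, ContinuousMap.coe_mk, ContinuousMap.sub_apply, ContinuousMap.add_apply]
        rw [eq_div_iff (hpos' x), sub_mul, add_mul, div_mul_cancel₀ _ (hpos' x),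
          div_mul_cancel₀ _ (hpos' x)]
        ring
      rw [e, norm_div, norm_mul, hn, div_le_iff₀ (hpos x), mul_comm]
      have h1 := hu x
      simp only [ContinuousMap.add_apply, NNReal.coe_add] at h1
      have h2 : ‖((ε : ℝ) : ℂ)‖ = ε := by simp
      rw [h2]
      gcongr
      have : (0:ℝ) ≤ ε := ε.2
      linarith
    have h4 : τ u = τ (A f) + τ (A g) + τ (u - (A f + A g)) := by
      simp only [map_sub, map_add]; ring
    rw [h4]
    refine (nnnorm_add_le _ _).trans ?_
    refine add_le_add ((nnnorm_add_le _ _).trans ?_) ?_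
    · exact add_le_add (le_tv τ f _ (hA f)) (le_tv τ g _ (hA g))
    · exact ((τ.le_opNNNorm _).trans (mul_le_mul_right h3 _)).trans hε'
  · have key : ∀ u v : C(X, ℂ), (∀ x, ‖u x‖ ≤ f x) → (∀ x, ‖v x‖ ≤ g x) →
        ‖τ u‖₊ + ‖τ v‖₊ ≤ tv τ (f + g : C(X, ℝ≥0)) := by
      intro u v hu hv
      obtain ⟨c, hc, hcu⟩ := exists_rot (τ u)
      obtain ⟨d, hd, hdv⟩ := exists_rot (τ v)
      have := le_tv τ (f + g) (c • u + d • v) (fun x => by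
        refine (norm_add_le _ _).trans ?_
        simp only [ContinuousMap.smul_apply, norm_smul, hc, hd, one_mul,
          ContinuousMap.add_apply, NNReal.coe_add]
        exact add_le_add (hu x) (hv x))
      refine le_trans (le_of_eq ?_) this
      rw [map_add, map_smul, map_smul, smul_eq_mul, smul_eq_mul, hcu, hdv]
      ext
      rw [coe_nnnorm, ← Complex.ofReal_add, Complex.norm_real, Real.norm_of_nonneg (by positivity)]
      simp
    have h1 : ∀ v : C(X, ℂ), (∀ x, ‖v x‖ ≤ g x) → tv τ f ≤ tv τ (f + g : C(X, ℝ≥0)) - ‖τ v‖₊ := by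
      intro v hv
      refine tv_le _ _ _ fun u hu => le_tsub_of_add_le_right (key u v hu hv)
    have h0 : tv τ f ≤ tv τ (f + g : C(X, ℝ≥0)) := (h1 0 (by simp)).trans tsub_le_self
    have h2 : tv τ g ≤ tv τ (f + g : C(X, ℝ≥0)) - tv τ f := by
      refine tv_le _ _ _ fun v hv => ?_
      have hh := h1 v hv
      have : ‖τ v‖₊ ≤ tv τ (f + g : C(X, ℝ≥0)) := by
        have := key 0 v (by simp) hv
        simpa using this
      rw [le_tsub_iff_right this] at hh
      exact le_tsub_of_add_le_left hh
    rw [le_tsub_iff_left h0] at h2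
    exact h2

/-- domination -/
theorem exists_dominating [T2Space X] [MeasurableSpace X] [BorelSpace X]
    (τ : C(X, ℂ) →L[ℂ] ℂ) :
    ∃ μ : Measure X, μ.Regular ∧ IsFiniteMeasure μ ∧ μ.real Set.univ ≤ ‖τ‖ ∧
      ∀ f : C(X, ℂ), ‖τ f‖ ≤ ∫ x, ‖f x‖ ∂μ := by
  let Λ : C_c(X, ℝ≥0) →ₗ[ℝ≥0] ℝ≥0 :=
    { toFun := fun f => tv τ f
      map_add' := fun f g => tv_add τ f.toContinuousMap g.toContinuousMap
      map_smul' := fun c f => tv_smul τ c f.toContinuousMap }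
  let cc (f : C(X, ℝ≥0)) : C_c(X, ℝ≥0) := ⟨f, HasCompactSupport.of_compactSpace _⟩
  have hfin : IsFiniteMeasure (NNRealRMK.rieszMeasure Λ) :=
    ⟨by
      have : (NNRealRMK.rieszMeasure Λ).Regular := inferInstance
      exact isCompact_univ.measure_lt_top⟩
  refine ⟨NNRealRMK.rieszMeasure Λ, inferInstance, hfin, ?_, ?_⟩
  · have h := NNRealRMK.integral_rieszMeasure Λ (cc 1)
    have h' : (∫ x, ((cc 1 x : ℝ≥0) : ℝ) ∂(NNRealRMK.rieszMeasure Λ)) =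
        (NNRealRMK.rieszMeasure Λ).real Set.univ := by
      simp [cc]
    rw [← h', h, ← coe_nnnorm, NNReal.coe_le_coe]
    refine tv_le _ _ _ fun u hu => ?_
    refine (τ.le_opNNNorm u).trans ?_
    refine mul_le_of_le_one_right' ?_
    rw [← NNReal.coe_le_coe, coe_nnnorm]
    refine (ContinuousMap.norm_le u (by positivity)).2 fun x => ?_
    simpa [cc] using hu x
  · intro f
    let k : C(X, ℝ≥0) := ⟨fun x => ‖f x‖₊, by fun_prop⟩
    have h := NNRealRMK.integral_rieszMeasure Λ (cc k)
    have h' : (∫ x, ((cc k x : ℝ≥0) : ℝ) ∂(NNRealRMK.rieszMeasure Λ)) =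
        ∫ x, ‖f x‖ ∂(NNRealRMK.rieszMeasure Λ) := by
      simp [cc, k]
    rw [← h', h, ← coe_nnnorm, NNReal.coe_le_coe]
    exact le_tv τ k f (fun x => le_of_eq rfl)

end dom

section four

/-- monomials -/
noncomputable def zp (n : ℤ) : C(Circle, ℂ) :=
  ⟨fun z => ((z ^ n : Circle) : ℂ), (show Continuous (fun z : Circle => (z : ℂ)) by fun_prop).comp (continuous_zpow n)⟩

lemma zp_apply (n : ℤ) (z : Circle) : zp n z = ((z ^ n : Circle) : ℂ) := rfl

lemma zp_norm (n : ℤ) (z : Circle) : ‖zp n z‖ = 1 := by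
  rw [zp_apply, Circle.norm_coe]

lemma zp_add (m n : ℤ) : zp (m + n) = zp m * zp n := by
  ext z; simp [zp_apply, zpow_add]

lemma zp_zero : zp 0 = 1 := by
  ext z; simp [zp_apply]

lemma zp_neg (n : ℤ) : zp (-n) = star (zp n) := by
  ext z
  simp only [zp_apply, ContinuousMap.star_apply, zpow_neg, Circle.coe_inv_eq_conj]
  rfl

/-- trig polynomials -/
noncomputable def trigAlg : StarSubalgebra ℂ C(Circle, ℂ) where
  toSubalgebra := Algebra.adjoin ℂ (Set.range zp)
  star_mem' := by
    change Algebra.adjoin ℂ (Set.range zp) ≤ star (Algebra.adjoin ℂ (Set.range zp))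
    refine Algebra.adjoin_le ?_
    rintro - ⟨n, rfl⟩
    exact Algebra.subset_adjoin ⟨-n, zp_neg n⟩

lemma trigAlg_coe : Subalgebra.toSubmodule trigAlg.toSubalgebra =
    Submodule.span ℂ (Set.range zp) := by
  apply Algebra.adjoin_eq_span_of_subset
  refine Set.Subset.trans ?_ Submodule.subset_span
  intro x hx
  refine Submonoid.closure_induction (fun _ => id) ⟨0, zp_zero⟩ ?_ hx
  rintro x y - - ⟨m, rfl⟩ ⟨n, rfl⟩
  exact ⟨m + n, zp_add m n⟩

lemma trig_dense : (Submodule.span ℂ (Set.range zp)).topologicalClosure = ⊤ := by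
  have h := ContinuousMap.starSubalgebra_topologicalClosure_eq_top_of_separatesPoints trigAlg (by
    intro x y hxy
    refine ⟨_, ⟨zp 1, Algebra.subset_adjoin ⟨1, rfl⟩, rfl⟩, ?_⟩
    simpa [zp_apply, Circle.coe_inj] using hxy)
  rw [← trigAlg_coe]
  exact congr_arg (Subalgebra.toSubmodule <| StarSubalgebra.toSubalgebra ·) h

lemma eq_zero_of_zp (L : C(Circle, ℂ) →L[ℂ] ℂ) (h : ∀ n, L (zp n) = 0) : L = 0 := by
  have h1 : (Submodule.span ℂ (Set.range zp)).topologicalClosure ≤ LinearMap.ker L.toLinearMap := by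
    refine Submodule.topologicalClosure_minimal _ ?_ L.isClosed_ker
    rw [Submodule.span_le]
    rintro _ ⟨n, rfl⟩
    exact h n
  rw [trig_dense] at h1
  ext f
  exact h1 (Submodule.mem_top : f ∈ ⊤)

variable [MeasurableSpace Circle] [BorelSpace Circle]

/-- integrate against k -/
noncomputable def intL (μ : Measure Circle) (k : Circle → ℂ) (hk : Integrable k μ) :
    C(Circle, ℂ) →L[ℂ] ℂ :=
  LinearMap.mkContinuous
    { toFun := fun f => ∫ z, f z * k z ∂μ
      map_add' := fun f g => by
        simp only [ContinuousMap.add_apply, add_mul]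
        exact integral_add
          (hk.bdd_mul (c := ‖f‖) f.continuous.aestronglyMeasurable (.of_forall f.norm_coe_le_norm))
          (hk.bdd_mul (c := ‖g‖) g.continuous.aestronglyMeasurable (.of_forall g.norm_coe_le_norm))
      map_smul' := fun c f => by
        simp only [ContinuousMap.smul_apply, smul_eq_mul, mul_assoc, RingHom.id_apply]
        exact integral_const_mul _ _ }
    (∫ z, ‖k z‖ ∂μ) (fun f => by
      refine (norm_integral_le_integral_norm _).trans ?_
      rw [mul_comm, ← integral_const_mul]
      refine integral_mono_of_nonneg (.of_forall fun z => norm_nonneg _)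
        (hk.norm.const_mul _) (.of_forall fun z => ?_)
      simp only [norm_mul]
      gcongr
      exact f.norm_coe_le_norm z)

lemma intL_apply (μ : Measure Circle) (k : Circle → ℂ) (hk : Integrable k μ) (f : C(Circle, ℂ)) :
    intL μ k hk f = ∫ z, f z * k z ∂μ := rfl

lemma norm_intL_le (μ : Measure Circle) (k : Circle → ℂ) (hk : Integrable k μ) :
    ‖intL μ k hk‖ ≤ ∫ z, ‖k z‖ ∂μ :=
  LinearMap.mkContinuous_norm_le _ (by positivity) _

lemma ae_zero_of_zp (μ : Measure Circle) (k : Circle → ℂ) (hk : Integrable k μ)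
    (h : ∀ n, ∫ z, zp n z * k z ∂μ = 0) : k =ᵐ[μ] 0 := by
  have h0 := eq_zero_of_zp (intL μ k hk) h
  refine ae_eq_zero_of_forall_setIntegral_isClosed_eq_zero hk fun s hs => ?_
  have hδ : ∀ n : ℕ, (0:ℝ) < 1 / ((n:ℝ) + 1) := fun n => by positivity
  have hlim := thickenedIndicator_tendsto_indicator_closure hδ
    tendsto_one_div_add_atTop_nhds_zero_nat s
  rw [hs.closure_eq, tendsto_pi_nhds] at hlim
  let f (n : ℕ) : C(Circle, ℂ) := ⟨fun z => ((thickenedIndicator (hδ n) s z : ℝ) : ℂ), by fun_prop⟩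
  have hf : ∀ n, ∫ z, f n z * k z ∂μ = 0 := fun n => by
    rw [← intL_apply μ k hk, h0]; rfl
  have key : Filter.Tendsto (fun n => ∫ z, f n z * k z ∂μ) Filter.atTop
      (nhds (∫ z, s.indicator k z ∂μ)) := by
    refine tendsto_integral_of_dominated_convergence (fun z => ‖k z‖) ?_ hk.norm ?_ ?_
    · intro n
      exact ((f n).continuous.aestronglyMeasurable).mul hk.1
    · intro n
      refine .of_forall fun z => ?_
      rw [norm_mul]
      refine mul_le_of_le_one_left (norm_nonneg _) ?_
      simpa [f] using thickenedIndicator_le_one (hδ n) s z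
    · refine .of_forall fun z => ?_
      have : s.indicator k z = (((s.indicator (fun _ => (1 : NNReal)) z : NNReal) : ℝ) : ℂ) * k z := by
        by_cases hz : z ∈ s <;> simp [hz]
      rw [this]
      refine Filter.Tendsto.mul_const _ ?_
      exact (Complex.continuous_ofReal.tendsto _).comp
        ((NNReal.continuous_coe.tendsto _).comp (hlim z))
  simp only [hf] at key
  rw [integral_indicator hs.measurableSet] at key
  exact (tendsto_nhds_unique key tendsto_const_nhds)

lemma measure_ext_zp (μ ν : Measure Circle) [IsFiniteMeasure μ] [IsFiniteMeasure ν]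
    (h : ∀ n, ∫ z, zp n z ∂μ = ∫ z, zp n z ∂ν) : μ = ν := by
  have h0 := eq_zero_of_zp (intL μ 1 (integrable_const _) - intL ν 1 (integrable_const _)) (by
    intro n
    simp [intL_apply, h])
  apply ext_of_forall_integral_eq_of_IsFiniteMeasure
  intro f
  have := DFunLike.congr_fun h0 (⟨fun z => (f z : ℂ), by fun_prop⟩ : C(Circle, ℂ))
  simp [intL_apply, sub_eq_zero, integral_complex_ofReal] at this
  exact_mod_cast this

lemma haar_zp (lam : Measure Circle) [lam.IsHaarMeasure] (n : ℤ) (hn : n ≠ 0) :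
    ∫ z, zp n z ∂lam = 0 := by
  have h := integral_mul_left_eq_self (μ := lam) (fun z => zp n z) (Circle.exp (Real.pi / n))
  have hn' : (n:ℝ) ≠ 0 := by exact_mod_cast hn
  have h2 : ∀ z, zp n (Circle.exp (Real.pi / n) * z) = - zp n z := fun z => by
    simp only [zp_apply, mul_zpow, ← Circle.exp_zsmul, Circle.coe_mul]
    have : (n : ℤ) • (Real.pi / n) = Real.pi := by
      rw [zsmul_eq_mul]; field_simp
    rw [this]; simp
  simp only [h2, integral_neg] at h
  have : (2:ℂ) * ∫ z, zp n z ∂lam = 0 := by linear_combination -h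
  simpa using this

end four

section core
open scoped ENNReal ComplexConjugate

/-- multiplication operator -/
noncomputable def mulOp {X : Type*} [MeasurableSpace X] (μ : Measure X) (φ : X → ℂ)
    (hφ : AEStronglyMeasurable φ μ) (hb : ∀ z, ‖φ z‖ ≤ 1) : Lp ℂ 2 μ →L[ℂ] Lp ℂ 2 μ :=
  have hm : ∀ f : Lp ℂ 2 μ, MemLp (fun z => φ z * f z) 2 μ := fun f =>
    (Lp.memLp f).of_le (hφ.mul (Lp.aestronglyMeasurable f)) (.of_forall fun z => by
      rw [norm_mul]; exact mul_le_of_le_one_left (norm_nonneg _) (hb z))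
  LinearMap.mkContinuous
    { toFun := fun f => (hm f).toLp (fun z => φ z * f z)
      map_add' := fun f g => by
        ext1
        filter_upwards [(hm (f + g)).coeFn_toLp, (hm f).coeFn_toLp, (hm g).coeFn_toLp,
          Lp.coeFn_add f g, Lp.coeFn_add ((hm f).toLp (fun z => φ z * f z))
            ((hm g).toLp (fun z => φ z * g z))] with z h1 h2 h3 h4 h5
        rw [h1, h5, Pi.add_apply, h2, h3, h4, Pi.add_apply, mul_add]
      map_smul' := fun c f => by
        ext1
        filter_upwards [(hm (c • f)).coeFn_toLp, (hm f).coeFn_toLp,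
          Lp.coeFn_smul c f, Lp.coeFn_smul c ((hm f).toLp (fun z => φ z * f z))] with z h1 h2 h4 h5
        rw [RingHom.id_apply, h1, h5, Pi.smul_apply, h2, h4, Pi.smul_apply, smul_eq_mul, smul_eq_mul]
        ring }
    1 (fun f => by
      rw [one_mul]
      refine Lp.norm_le_norm_of_ae_le ?_
      filter_upwards [(hm f).coeFn_toLp] with z h1
      simp only [LinearMap.coe_mk, AddHom.coe_mk]
      rw [h1, norm_mul]
      exact mul_le_of_le_one_left (norm_nonneg _) (hb z))

lemma mulOp_coe {X : Type*} [MeasurableSpace X] (μ : Measure X) (φ : X → ℂ)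
    (hφ : AEStronglyMeasurable φ μ) (hb : ∀ z, ‖φ z‖ ≤ 1) (f : Lp ℂ 2 μ) :
    mulOp μ φ hφ hb f =ᵐ[μ] fun z => φ z * f z :=
  MemLp.coeFn_toLp ((Lp.memLp f).of_le (hφ.mul (Lp.aestronglyMeasurable f))
    (.of_forall fun z => by
      rw [Pi.mul_apply, norm_mul]; exact mul_le_of_le_one_left (norm_nonneg _) (hb z)))

lemma span_le_of_gen {H : Type*} [NormedAddCommGroup H] [InnerProductSpace ℂ H]
    (s : Set H) (K : Submodule ℂ H) (hK : IsClosed (K : Set H)) (T : H →L[ℂ] H)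
    (h : ∀ v ∈ s, T v ∈ K) : ∀ v ∈ (Submodule.span ℂ s).topologicalClosure, T v ∈ K := by
  have : (Submodule.span ℂ s).topologicalClosure ≤ K.comap T.toLinearMap := by
    refine Submodule.topologicalClosure_minimal _ ?_ (hK.preimage T.continuous)
    rw [Submodule.span_le]
    exact h
  exact this

theorem core [MeasurableSpace Circle] [BorelSpace Circle]
    (lam : Measure Circle) [lam.IsHaarMeasure] [IsProbabilityMeasure lam]
    (μ : Measure Circle) [IsFiniteMeasure μ] (h : Circle → ℂ) (hh : MemLp h 2 μ)
    (hann : ∀ n : ℤ, 0 ≤ n → ∫ z, zp n z * h z ∂μ = 0) :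
    ∃ S : Set Circle, MeasurableSet S ∧ (∀ᵐ z ∂μ, z ∈ S → h z = 0) ∧ μ.restrict Sᶜ ≪ lam := by
  let e (n : ℤ) : Lp ℂ 2 μ := ContinuousMap.toLp (E := ℂ) 2 μ ℂ (zp n)
  have he : ∀ n, e n =ᵐ[μ] fun z => zp n z := fun n => ContinuousMap.coeFn_toLp μ (zp n)
  let Z (n : ℤ) := mulOp μ (zp n) (zp n).continuous.aestronglyMeasurable (fun z => (zp_norm n z).le)
  have hZ : ∀ n f, Z n f =ᵐ[μ] fun z => zp n z * f z := fun n f => mulOp_coe _ _ _ _ _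
  have hadd : ∀ m n z, zp (m + n) z = zp m z * zp n z := fun m n z => by rw [zp_add]; rfl
  have hz0 : ∀ z, zp 0 z = 1 := fun z => by rw [zp_zero]; rfl
  have hzneg : ∀ n z, zp (-n) z = conj (zp n z) := fun n z => by rw [zp_neg]; rfl
  have hZe : ∀ m n, Z m (e n) = e (m + n) := fun m n => by
    ext1
    filter_upwards [hZ m (e n), he n, he (m + n)] with z h1 h2 h3
    rw [h1, h2, h3, hadd]
  have hZZ : ∀ m n f, Z m (Z n f) = Z (m + n) f := fun m n f => by
    ext1
    filter_upwards [hZ m (Z n f), hZ n f, hZ (m + n) f] with z h1 h2 h3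
    rw [h1, h2, h3, hadd, mul_assoc]
  have hZ0 : ∀ f, Z 0 f = f := fun f => by
    ext1
    filter_upwards [hZ 0 f] with z h1
    rw [h1, hz0, one_mul]
  let M0 := (Submodule.span ℂ (e '' {n | 0 ≤ n})).topologicalClosure
  let M1 := (Submodule.span ℂ (e '' {n | 1 ≤ n})).topologicalClosure
  have cM0 : IsClosed (M0 : Set (Lp ℂ 2 μ)) := Submodule.isClosed_topologicalClosure _
  have cM1 : IsClosed (M1 : Set (Lp ℂ 2 μ)) := Submodule.isClosed_topologicalClosure _
  have e0 : ∀ n, 0 ≤ n → e n ∈ M0 := fun n hn =>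
    Submodule.le_topologicalClosure _ (Submodule.subset_span ⟨n, hn, rfl⟩)
  have e1 : ∀ n, 1 ≤ n → e n ∈ M1 := fun n hn =>
    Submodule.le_topologicalClosure _ (Submodule.subset_span ⟨n, hn, rfl⟩)
  have hM10 : M1 ≤ M0 := Submodule.topologicalClosure_mono (Submodule.span_mono
    (Set.image_mono fun n (hn : 1 ≤ n) => (show (0:ℤ) ≤ n by omega)))
  have hZM0 : ∀ n, 0 ≤ n → ∀ f ∈ M0, Z n f ∈ M0 := fun n hn =>
    span_le_of_gen _ _ cM0 _ (by
      rintro _ ⟨m, hm, rfl⟩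
      have hm : 0 ≤ m := hm
      rw [hZe]; exact e0 _ (by omega))
  have hZM1 : ∀ n, 1 ≤ n → ∀ f ∈ M0, Z n f ∈ M1 := fun n hn =>
    span_le_of_gen _ _ cM1 _ (by
      rintro _ ⟨m, hm, rfl⟩
      have hm : 0 ≤ m := hm
      rw [hZe]; exact e1 _ (by omega))
  have hZM1' : ∀ f ∈ M1, Z (-1) f ∈ M0 :=
    span_le_of_gen _ _ cM0 _ (by
      rintro _ ⟨m, hm, rfl⟩
      have hm : 1 ≤ m := hm
      rw [hZe]; exact e0 _ (by omega))
  have : CompleteSpace M1 := cM1.completeSpace_coe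
  let p : Lp ℂ 2 μ := M1.starProjection (e 0)
  have hp : p ∈ M1 := Submodule.starProjection_apply_mem _ _
  let F : Lp ℂ 2 μ := e 0 - p
  have hFM0 : F ∈ M0 := M0.sub_mem (e0 0 le_rfl) (hM10 hp)
  have hFperp : ∀ f ∈ M1, inner ℂ F f = 0 := fun f hf =>
    (Submodule.mem_orthogonal' _ _).1 (Submodule.sub_starProjection_mem_orthogonal (K := M1) (e 0)) f hf
  have hinner : ∀ f g : Lp ℂ 2 μ, inner ℂ f g = ∫ z, g z * conj (f z) ∂μ := fun f g => by
    rw [L2.inner_def]; rfl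
  -- the measure |F|^2 μ
  have hFm : Measurable (F : Circle → ℂ) := (Lp.stronglyMeasurable F).measurable
  let d : Circle → ℝ≥0∞ := fun z => ENNReal.ofReal (‖F z‖ ^ 2)
  have hdm : Measurable d := by fun_prop
  let ρ := μ.withDensity d
  have hFsq : Integrable (fun z => ‖F z‖ ^ 2) μ := (Lp.memLp F).integrable_norm_pow (by norm_num)
  have hρ : IsFiniteMeasure ρ := isFiniteMeasure_withDensity_ofReal hFsq.2
  have hρint : ∀ n, ∫ z, zp n z ∂ρ = ∫ z, zp n z * (F z * conj (F z)) ∂μ := fun n => by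
    rw [integral_withDensity_eq_integral_toReal_smul hdm (.of_forall fun z => ENNReal.ofReal_lt_top)]
    refine integral_congr_ae (.of_forall fun z => ?_)
    simp only [d]
    rw [ENNReal.toReal_ofReal (by positivity), Complex.mul_conj, Complex.normSq_eq_norm_sq,
      mul_comm, Complex.real_smul]
  have hρpos : ∀ n, 1 ≤ n → ∫ z, zp n z ∂ρ = 0 := fun n hn => by
    rw [hρint, ← hFperp _ (hZM1 n hn F hFM0), hinner]
    refine integral_congr_ae ?_
    filter_upwards [hZ n F] with z h1
    rw [h1, mul_assoc]
  have hρall : ∀ n, n ≠ 0 → ∫ z, zp n z ∂ρ = 0 := fun n hn => by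
    rcases lt_or_gt_of_ne hn with h' | h'
    · have := hρpos (-n) (by omega)
      simp only [hzneg, integral_conj] at this
      simpa using this
    · exact hρpos n h'
  have hρlam : ρ = (ρ Set.univ) • lam := by
    have : IsFiniteMeasure ((ρ Set.univ) • lam) := lam.smul_finite (measure_ne_top _ _)
    refine measure_ext_zp _ _ fun n => ?_
    rw [integral_smul_measure]
    rcases eq_or_ne n 0 with rfl | hn
    · simp [hz0, Measure.real]
    · rw [hρall n hn, haar_zp lam n hn, smul_zero]
  let S : Set Circle := {z | F z = 0}
  have hS : MeasurableSet S := hFm (measurableSet_singleton 0)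
  have hac : μ.restrict Sᶜ ≪ lam := by
    refine Measure.AbsolutelyContinuous.mk fun E hE hE0 => ?_
    have h1 : ρ E = 0 := by rw [hρlam]; simp [hE0]
    rw [withDensity_apply_eq_zero hdm] at h1
    rw [Measure.restrict_apply hE]
    refine measure_mono_null ?_ h1
    rintro z ⟨hz1, hz2⟩
    refine ⟨?_, hz1⟩
    have : F z ≠ 0 := hz2
    simp [d, this]
  refine ⟨S, hS, ?_, hac⟩
  -- wandering part
  let I : Circle → ℂ := S.indicator 1
  have hIm : AEStronglyMeasurable I μ :=
    (stronglyMeasurable_one.indicator hS).aestronglyMeasurable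
  have hIb : ∀ z, ‖I z‖ ≤ 1 := fun z => by
    by_cases hz : z ∈ S <;> simp [I, hz]
  have hI1 : ∀ z ∈ S, I z = 1 := fun z hz => by simp [I, hz]
  have hI0 : ∀ z, F z ≠ 0 → I z = 0 := fun z hz => Set.indicator_of_notMem (show z ∉ S from hz) _
  have hIF : ∀ z, I z * F z = 0 := fun z => by
    by_cases hz : F z = 0
    · simp [hz]
    · simp [hI0 z hz]
  let Q := mulOp μ I hIm hIb
  have hQ : ∀ f, Q f =ᵐ[μ] fun z => I z * f z := fun f => mulOp_coe _ _ _ _ _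
  have hQZ : ∀ n f, Q (Z n f) = Z n (Q f) := fun n f => by
    ext1
    filter_upwards [hQ (Z n f), hZ n f, hZ n (Q f), hQ f] with z h1 h2 h3 h4
    rw [h1, h2, h3, h4]; ring
  have hQF : Q F = 0 := by
    ext1
    filter_upwards [hQ F, Lp.coeFn_zero ℂ 2 μ] with z h1 h2
    rw [h1, h2, hIF]; rfl
  let N := (Submodule.span ℂ ((fun n => Z n F) '' {n | 0 ≤ n})).topologicalClosure
  have cN : IsClosed (N : Set (Lp ℂ 2 μ)) := Submodule.isClosed_topologicalClosure _
  have : CompleteSpace N := cN.completeSpace_coe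
  let q : Lp ℂ 2 μ := N.starProjection (e 0)
  have hq : q ∈ N := Submodule.starProjection_apply_mem _ _
  have hNM0 : ∀ f ∈ N, f ∈ M0 := span_le_of_gen _ _ cM0 (ContinuousLinearMap.id ℂ _) (by
    rintro _ ⟨n, hn, rfl⟩
    exact hZM0 n hn F hFM0)
  have hNQ : ∀ f ∈ N, Q f = 0 := fun f hf => by
    have := span_le_of_gen _ (⊥ : Submodule ℂ (Lp ℂ 2 μ)) (by simp) Q (by
      rintro _ ⟨n, hn, rfl⟩
      simp only [hQZ, hQF, map_zero, Submodule.zero_mem]) f hf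
    simpa using this
  let y : Lp ℂ 2 μ := e 0 - q
  have hyM0 : y ∈ M0 := M0.sub_mem (e0 0 le_rfl) (hNM0 q hq)
  have hyperp : ∀ f ∈ N, inner ℂ f y = 0 := fun f hf =>
    (Submodule.mem_orthogonal _ _).1 (Submodule.sub_starProjection_mem_orthogonal (K := N) (e 0)) f hf
  have hyF : ∀ n, ∫ z, zp n z * (y z * conj (F z)) ∂μ = 0 := fun n => by
    rcases le_or_gt n 0 with hn | hn
    · rw [← hyperp (Z (-n) F) (Submodule.le_topologicalClosure _
        (Submodule.subset_span ⟨-n, (show 0 ≤ -n by omega), rfl⟩)), hinner]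
      refine integral_congr_ae ?_
      filter_upwards [hZ (-n) F] with z h1
      rw [h1, hzneg, map_mul, Complex.conj_conj]; ring
    · rw [← hFperp (Z n y) (hZM1 n hn y hyM0), hinner]
      refine integral_congr_ae ?_
      filter_upwards [hZ n y] with z h1
      rw [h1]; ring
  have hyFint : Integrable (fun z => y z * conj (F z)) μ := L2.integrable_inner (𝕜 := ℂ) F y
  have hyF0 := ae_zero_of_zp μ _ hyFint hyF
  have hy : y =ᵐ[μ] I := by
    have h5 := hQ q
    rw [hNQ q hq] at h5
    filter_upwards [hyF0, h5, Lp.coeFn_zero ℂ 2 μ, Lp.coeFn_sub (e 0) q, he 0] with z h1 h2 h3 h4 h6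
    by_cases hz : F z = 0
    · rw [hI1 z hz] at h2 ⊢
      rw [h3, one_mul] at h2
      rw [show (y : Circle → ℂ) z = _ from h4, Pi.sub_apply, ← h2, h6, hz0]; simp
    · rw [hI0 z hz]
      simpa [hz] using h1
  -- the functional
  let k : Lp ℂ 2 μ := hh.star.toLp _
  have hk : k =ᵐ[μ] fun z => conj (h z) := hh.star.coeFn_toLp
  have hkin : ∀ f : Lp ℂ 2 μ, inner ℂ k f = ∫ z, f z * h z ∂μ := fun f => by
    rw [hinner]
    refine integral_congr_ae ?_
    filter_upwards [hk] with z h1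
    rw [h1, Complex.conj_conj]
  have hker : ∀ (T : Lp ℂ 2 μ →L[ℂ] Lp ℂ 2 μ), (∀ n, 0 ≤ n → inner ℂ k (T (e n)) = 0) →
      ∀ f ∈ M0, inner ℂ k (T f) = 0 := fun T hT => by
    have := span_le_of_gen (e '' {n | 0 ≤ n}) (LinearMap.ker (innerSL ℂ k).toLinearMap)
      (innerSL ℂ k).isClosed_ker T (by
        rintro _ ⟨n, hn, rfl⟩
        exact hT n hn)
    exact this
  have hkM0 : ∀ f ∈ M0, inner ℂ k f = 0 := hker (ContinuousLinearMap.id ℂ _) (fun n hn => by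
    rw [← hann n hn, hkin]
    refine integral_congr_ae ?_
    filter_upwards [he n] with z h1
    simp [h1])
  have hP : ∀ m : ℕ, ∀ f ∈ M0, inner ℂ k (Q (Z (-(m:ℤ)) f)) = 0 := fun m => by
    induction m with
    | zero =>
      have := hker Q (fun n hn => by
        have h1 : Q (e n) = Z n y := by
          ext1
          filter_upwards [hQ (e n), he n, hZ n y, hy] with z h1 h2 h3 h4
          rw [h1, h2, h3, h4, mul_comm]
        rw [h1]
        exact hkM0 _ (hZM0 n hn y hyM0))
      simpa [hZ0] using this
    | succ m ih =>
      refine hker (Q.comp (Z (-((m + 1 : ℕ) : ℤ)))) (fun n hn => ?_)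
      rw [ContinuousLinearMap.comp_apply]
      have hsplit : ∀ f, Z (-((m + 1 : ℕ) : ℤ)) f = Z (-(m:ℤ)) (Z (-1) f) := fun f => by
        rw [hZZ]; congr 1; push_cast; ring_nf
      rcases eq_or_lt_of_le hn with rfl | hn'
      · have h1 : e 0 = F + p := by simp [F]
        rw [h1, map_add, map_add, hQZ _ F, hQF, map_zero, zero_add, hsplit]
        exact ih _ (hZM1' p hp)
      · rw [hsplit]
        exact ih _ (hZM1' _ (e1 n hn'))
  have hfin : ∀ n, ∫ z, zp n z * (I z * h z) ∂μ = 0 := fun n => by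
    have h1 : inner ℂ k (Q (e n)) = 0 := by
      rcases le_or_gt 0 n with hn | hn
      · have := hP 0 (e n) (e0 n hn)
        simpa [hZ0] using this
      · have := hP n.natAbs (e 0) (e0 0 le_rfl)
        rw [hZe] at this
        rwa [show -(n.natAbs : ℤ) + 0 = n by omega] at this
    rw [← h1, hkin]
    refine integral_congr_ae ?_
    filter_upwards [hQ (e n), he n] with z h2 h3
    rw [h2, h3]; ring
  have hIh : Integrable (fun z => I z * h z) μ :=
    (hh.integrable (by norm_num)).bdd_mul (c := 1) hIm (.of_forall hIb)
  filter_upwards [ae_zero_of_zp μ _ hIh hfin] with z h1 hz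
  simpa [hI1 z hz] using h1

end core

section rep
open scoped ENNReal ComplexConjugate

theorem exists_rep [MeasurableSpace Circle] [BorelSpace Circle] (τ : C(Circle, ℂ) →L[ℂ] ℂ) :
    ∃ (μ : Measure Circle) (h : Circle → ℂ), IsFiniteMeasure μ ∧ MemLp h 2 μ ∧
      (∫ z, ‖h z‖ ∂μ) ≤ ‖τ‖ ∧ ∀ f : C(Circle, ℂ), τ f = ∫ z, f z * h z ∂μ := by
  obtain ⟨μ, hreg, hfin, hmass, hdom⟩ := exists_dominating τ
  let e : C(Circle, ℂ) →ₗ[ℂ] Lp ℂ 2 μ := (ContinuousMap.toLp (E := ℂ) 2 μ ℂ).toLinearMap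
  have hee : ∀ f, e f =ᵐ[μ] f := fun f => ContinuousMap.coeFn_toLp μ f
  have hdense : DenseRange e := ContinuousMap.toLp_denseRange ℂ μ ℂ (by norm_num)
  let m := μ.real Set.univ
  have hm : 0 ≤ m := by positivity
  have hbound : ∀ f, ‖τ.toLinearMap f‖ ≤ m ^ (1/2 : ℝ) * ‖e f‖ := fun f => by
    refine (hdom f).trans ?_
    have h1 := eLpNorm_le_eLpNorm_mul_rpow_measure_univ (p := 1) (q := 2) (μ := μ) (f := f)
      (by norm_num) f.continuous.aestronglyMeasurable
    have h2 : ‖e f‖ = (eLpNorm f 2 μ).toReal := by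
      rw [Lp.norm_def, eLpNorm_congr_ae (hee f)]
    have hf2 : eLpNorm f 2 μ ≠ ∞ := by
      rw [← eLpNorm_congr_ae (hee f)]; exact (Lp.memLp (e f)).2.ne
    have h3 : ∫ x, ‖f x‖ ∂μ = (eLpNorm f 1 μ).toReal := by
      rw [eLpNorm_one_eq_lintegral_enorm, integral_norm_eq_lintegral_enorm
        f.continuous.aestronglyMeasurable]
    rw [h2, h3, mul_comm]
    have h4 : m ^ (1/2 : ℝ) = (μ Set.univ ^ (1 / (1:ℝ≥0∞).toReal - 1 / (2:ℝ≥0∞).toReal)).toReal := by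
      rw [← ENNReal.toReal_rpow]
      norm_num [m, Measure.real]
    rw [h4, ← ENNReal.toReal_mul]
    refine ENNReal.toReal_mono (ENNReal.mul_ne_top hf2 ?_) h1
    exact ENNReal.rpow_ne_top_of_nonneg (by norm_num) (measure_ne_top _ _)
  let T : Lp ℂ 2 μ →L[ℂ] ℂ := τ.toLinearMap.extendOfNorm e
  have hT : ∀ f, T (e f) = τ f := fun f => LinearMap.extendOfNorm_eq hdense ⟨_, hbound⟩ f
  have hTn : ∀ f, ‖T f‖ ≤ m ^ (1/2 : ℝ) * ‖f‖ := fun f =>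
    LinearMap.norm_extendOfNorm_apply_le hdense _ hbound f
  let k : Lp ℂ 2 μ := (InnerProductSpace.toDual ℂ (Lp ℂ 2 μ)).symm T
  have hk : ∀ f, T f = ∫ z, f z * conj (k z) ∂μ := fun f => by
    rw [← InnerProductSpace.toDual_symm_apply (𝕜 := ℂ) (x := f) (y := T), L2.inner_def]; rfl
  refine ⟨μ, fun z => conj (k z), hfin, (Lp.memLp k).star, ?_, fun f => ?_⟩
  · let s : Circle → ℂ := fun z => k z / (‖k z‖ : ℂ)
    have hkm : Measurable (k : Circle → ℂ) := (Lp.stronglyMeasurable k).measurable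
    have hsm : Measurable s := by fun_prop
    have hsb : ∀ z, ‖s z‖ ≤ 1 := fun z => by
      simp only [s, norm_div, Complex.norm_real, norm_norm]
      exact div_self_le_one _
    have hs : MemLp s 2 μ := MemLp.of_bound hsm.aestronglyMeasurable 1 (.of_forall hsb)
    have h1 : T (hs.toLp s) = ((∫ z, ‖k z‖ ∂μ : ℝ) : ℂ) := by
      rw [hk, ← integral_complex_ofReal]
      refine integral_congr_ae ?_
      filter_upwards [hs.coeFn_toLp] with z hz
      rw [hz]
      simp only [s]
      rw [div_mul_eq_mul_div, Complex.mul_conj, Complex.normSq_eq_norm_sq]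
      rcases eq_or_ne (‖k z‖ : ℂ) 0 with h0 | h0
      · simp [h0]
      · push_cast; field_simp
    have h2 : ‖hs.toLp s‖ ≤ m ^ (1/2 : ℝ) := by
      have := Lp.norm_le_of_ae_bound (f := hs.toLp s) (C := 1) zero_le_one (by
        filter_upwards [hs.coeFn_toLp] with z hz
        rw [hz]; exact hsb z)
      simpa [m, measureUnivNNReal, Measure.real, ENNReal.coe_toNNReal_eq_toReal] using this
    have h3 := (hTn (hs.toLp s)).trans (mul_le_mul_of_nonneg_left h2 (by positivity))
    rw [h1, Complex.norm_real, Real.norm_of_nonneg (by positivity),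
      ← Real.rpow_add_of_nonneg hm (by norm_num) (by norm_num)] at h3
    norm_num at h3
    simp only [RCLike.norm_conj]
    exact h3.trans hmass
  · rw [← hT, hk]
    refine integral_congr_ae ?_
    filter_upwards [hee f] with z hz
    rw [hz]

end rep

/-- Corollary 3.7 of the paper, in concrete form: every bounded linear functional `τ` on
`C(𝕋)` annihilating the monomials `ζ ↦ ζ ^ n`, `n ≥ 0` (hence the disc algebra) is given
by integration against a function `g ∈ L¹(𝕋, λ)` with `‖g‖₁ = ‖τ‖`, all of whose
nonnegative Fourier-type moments `∫ ζ ^ n g dλ` vanish. -/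
theorem stmt_4 [MeasurableSpace Circle] [BorelSpace Circle]
    (lam : Measure Circle) [lam.IsHaarMeasure] [IsProbabilityMeasure lam]
    (τ : C(Circle, ℂ) →L[ℂ] ℂ)
    (hann : ∀ n : ℕ, τ ⟨fun z => (z : ℂ) ^ n, by fun_prop⟩ = 0) :
    ∃ g : Circle → ℂ, Integrable g lam ∧
      (∫ z, ‖g z‖ ∂lam) = ‖τ‖ ∧
      (∀ n : ℕ, (∫ z, (z : ℂ) ^ n * g z ∂lam) = 0) ∧
      ∀ f : C(Circle, ℂ), τ f = ∫ z, f z * g z ∂lam := by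
  obtain ⟨μ, h, hfin, hh, hnorm, hrep⟩ := exists_rep τ
  have hzp : ∀ n : ℤ, 0 ≤ n → ∫ z, zp n z * h z ∂μ = 0 := fun n hn => by
    rw [← hrep]
    obtain ⟨m, rfl⟩ := Int.eq_ofNat_of_zero_le hn
    rw [← hann m]
    congr 1
  obtain ⟨S, hS, hS0, hac⟩ := core lam μ h hh hzp
  have hhI : Integrable h μ := hh.integrable (by norm_num)
  let ρ := μ.restrict Sᶜ
  let w : Circle → ℝ := fun z => (ρ.rnDeriv lam z).toReal
  let g : Circle → ℂ := fun z => w z • h z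
  have hg : Integrable g lam := (integrable_rnDeriv_smul_iff hac).2 hhI.restrict
  have hτ : ∀ f : C(Circle, ℂ), τ f = ∫ z, f z * g z ∂lam := fun f => by
    rw [hrep]
    have h1 : ∫ z, f z * g z ∂lam = ∫ z, w z • (f z * h z) ∂lam := by
      refine integral_congr_ae (.of_forall fun z => ?_)
      simp only [g, Complex.real_smul]; ring
    rw [h1, integral_rnDeriv_smul hac]
    refine (setIntegral_eq_integral_of_ae_compl_eq_zero ?_).symm
    filter_upwards [hS0] with z hz hz'
    rw [hz (by simpa using hz'), mul_zero]
  refine ⟨g, hg, le_antisymm ?_ ?_, fun n => ?_, hτ⟩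
  · refine le_trans ?_ hnorm
    have h1 : ∫ z, ‖g z‖ ∂lam = ∫ z, w z • ‖h z‖ ∂lam := by
      refine integral_congr_ae (.of_forall fun z => ?_)
      simp only [g, norm_smul, smul_eq_mul]
      rw [Real.norm_of_nonneg ENNReal.toReal_nonneg]
    rw [h1, integral_rnDeriv_smul hac]
    exact setIntegral_le_integral hhI.norm (.of_forall fun z => norm_nonneg _)
  · have : τ = intL lam g hg := by
      ext f
      rw [hτ, intL_apply]
    rw [this]
    exact norm_intL_le lam g hg
  · have := hτ ⟨fun z => (z : ℂ) ^ n, by fun_prop⟩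
    rw [hann] at this
    exact this.symm
end
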